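/- Let f_j : Ω → 𝔹ⁿ be a sequence of injective holomorphic maps on a domain Ω ⊆ ℂⁿ with f_j(z₀) = 0 for a fixed z₀ ∈ Ω, converging uniformly on compact subsets to a map f : Ω → closure(𝔹ⁿ). Suppose the inverses g_j = f_j⁻¹ : B_{1-δ}(0) → Ω are defined on B_{1-δ}(0) (i.e., B_{1-δ}(0) ⊆ f_j(Ω)) and converge uniformly on compacts to g : B_{1-δ}(0) → ℂⁿ with g nonconstant. Then f restricted to g(B_{1-δ}(0)) is the inverse of g, and B_{1-δ}(0) ⊆ f(Ω). -/

import Mathlib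

open Metric Set Filter

/-!
By Osgood's theorem an injective holomorphic map between spaces of the same dimension has an
invertible derivative everywhere. Hence the inverses `gⱼ` are holomorphic with nowhere vanishing
Jacobian determinants, and so is their limit `g`: by Hurwitz's theorem `det g'` vanishes nowhere or
identically, and at `f z₀` it does not vanish because `f ∘ g = id` near `f z₀`. An invertible
derivative makes openness stable under locally uniform convergence, so every `g w` is a value of
some `gⱼ` and lies in `Ω`; passing to the limit in `fⱼ (gⱼ w) = w` gives `f (g w) = w`.

Osgood's theorem is proved by induction on the dimension. Where `f'` is nonzero, one passes to a
level set of a component of `f`. If `f'` were zero at every zero of `det f'`, then `f` would be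
constant on any disc inside the zero set of `det f'`, and in dimension at least two a nonempty zero
set contains a disc.
-/

open Topology

section Limits

variable {ι E F : Type*} [NormedAddCommGroup E] [NormedSpace ℂ E]
  [NormedAddCommGroup F] [NormedSpace ℂ F] {p : Filter ι} {U : Set E}

theorem norm_fderiv_le_of_forall_mem_ball_norm_le {f : E → F} {c : E} {R M : ℝ} (hR : 0 < R)
    (hf : DifferentiableOn ℂ f (ball c R)) (hM : ∀ x ∈ ball c R, ‖f x‖ ≤ M) :
    ‖fderiv ℂ f c‖ ≤ 2 * M / R := by
  refine Complex.norm_fderiv_le_div_of_mapsTo_ball hf (fun x hx => ?_) hR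
  rw [mem_closedBall, dist_eq_norm]
  linarith [hM x hx, hM c (mem_ball_self hR), norm_sub_le (f x) (f c)]

theorem uniformCauchySeqOn_fderiv {f : ι → E → F} {s t : Set E} {R : ℝ} (hR : 0 < R)
    (hst : ∀ x ∈ s, ball x R ⊆ t) (hd : ∀ᶠ i in p, DifferentiableOn ℂ (f i) t)
    (hf : UniformCauchySeqOn f p t) :
    UniformCauchySeqOn (fun i => fderiv ℂ (f i)) p s := by
  intro u hu
  obtain ⟨ε, hε, hεu⟩ := mem_uniformity_dist.1 hu
  have hclose := hf _ (dist_mem_uniformity (show 0 < ε * R / 4 by positivity))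
  filter_upwards [hclose, hd.prod_mk hd] with ⟨i, j⟩ hij ⟨hi, hj⟩ x hx
  have hdiff : ∀ g : E → F, DifferentiableOn ℂ g t → DifferentiableAt ℂ g x := fun g hg =>
    (hg.mono (hst x hx)).differentiableAt (ball_mem_nhds x hR)
  refine hεu ?_
  rw [dist_eq_norm, ← fderiv_sub (hdiff _ hi) (hdiff _ hj)]
  calc ‖fderiv ℂ (f i - f j) x‖ ≤ 2 * (ε * R / 4) / R :=
        norm_fderiv_le_of_forall_mem_ball_norm_le hR ((hi.sub hj).mono (hst x hx)) fun y hy => by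
          simpa only [dist_eq_norm, Pi.sub_apply] using (hij y (hst x hx hy)).le
    _ = ε / 2 := by field_simp; norm_num
    _ < ε := half_lt_self hε

theorem differentiableOn_and_tendstoUniformlyOn_fderiv [CompleteSpace F] [p.NeBot]
    {f : ι → E → F} {g : E → F} {s t : Set E} {R : ℝ} (hs : IsOpen s) (hR : 0 < R)
    (hst : ∀ x ∈ s, ball x R ⊆ t) (hd : ∀ᶠ i in p, DifferentiableOn ℂ (f i) t)
    (hf : TendstoUniformlyOn f g p t) :
    DifferentiableOn ℂ g s ∧
      TendstoUniformlyOn (fun i => fderiv ℂ (f i)) (fderiv ℂ g) p s := by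
  have hcauchy := uniformCauchySeqOn_fderiv hR hst hd hf.uniformCauchySeqOn
  have hex : ∀ x ∈ s, ∃ A, Tendsto (fun i => fderiv ℂ (f i) x) p (𝓝 A) := fun x hx =>
    CompleteSpace.complete (hcauchy.cauchy_map hx)
  choose! A hA using hex
  have hunif := hcauchy.tendstoUniformlyOn_of_tendsto hA
  have hderiv : ∀ x ∈ s, HasFDerivAt g (A x) x := fun x hx => by
    have hderiv_i : ∀ᶠ q : ι × E in p ×ˢ 𝓝 x, HasFDerivAt (f q.1) (fderiv ℂ (f q.1) q.2) q.2 := by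
      filter_upwards [hd.prod_mk (hs.mem_nhds hx)] with q hq
      exact (hq.1.differentiableAt
        (mem_of_superset (ball_mem_nhds _ hR) (hst _ hq.2))).hasFDerivAt
    refine hasFDerivAt_of_tendstoUniformlyOnFilter (f := f)
      (f' := fun i => fderiv ℂ (f i)) (g' := A) ?_ hderiv_i ?_
    · exact (tendstoUniformlyOn_iff_tendstoUniformlyOnFilter.1 hunif).mono_right
        (le_principal_iff.2 (hs.mem_nhds hx))
    · filter_upwards [hs.mem_nhds hx] with y hy
      exact hf.tendsto_at (hst y hy (mem_ball_self hR))
  exact ⟨fun x hx => (hderiv x hx).differentiableAt.differentiableWithinAt,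
    hunif.congr_right fun x hx => (hderiv x hx).fderiv.symm⟩

variable [FiniteDimensional ℂ E]

theorem exists_ball_tendstoUniformlyOn {X : Type*} [UniformSpace X] {f : ι → E → X} {g : E → X}
    (hU : IsOpen U) (hf : TendstoLocallyUniformlyOn f g p U) {x : E} (hx : x ∈ U) :
    ∃ r > 0, ball x r ⊆ U ∧ TendstoUniformlyOn f g p (ball x r) := by
  have := FiniteDimensional.proper ℂ E
  obtain ⟨r, hr, hrU⟩ := nhds_basis_closedBall.mem_iff.1 (hU.mem_nhds hx)
  exact ⟨r, hr, ball_subset_closedBall.trans hrU,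
    ((tendstoLocallyUniformlyOn_iff_forall_isCompact hU).1 hf _ hrU
      (isCompact_closedBall x r)).mono ball_subset_closedBall⟩

theorem differentiableOn_and_tendstoLocallyUniformlyOn_fderiv [CompleteSpace F] [p.NeBot]
    {f : ι → E → F} {g : E → F} (hU : IsOpen U) (hd : ∀ᶠ i in p, DifferentiableOn ℂ (f i) U)
    (hf : TendstoLocallyUniformlyOn f g p U) :
    DifferentiableOn ℂ g U ∧
      TendstoLocallyUniformlyOn (fun i => fderiv ℂ (f i)) (fderiv ℂ g) p U := by
  have hlocal : ∀ x ∈ U, ∃ s ∈ 𝓝 x, DifferentiableOn ℂ g s ∧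
      TendstoUniformlyOn (fun i => fderiv ℂ (f i)) (fderiv ℂ g) p s := by
    intro x hx
    obtain ⟨r, hr, hrU, hfr⟩ := exists_ball_tendstoUniformlyOn hU hf hx
    refine ⟨ball x (r / 2), ball_mem_nhds x (half_pos hr),
      differentiableOn_and_tendstoUniformlyOn_fderiv isOpen_ball (half_pos hr) (fun y hy => ?_)
        (hd.mono fun i hi => hi.mono hrU) hfr⟩
    exact ball_subset_ball' (by linarith [mem_ball.1 hy])
  refine ⟨fun x hx => ?_, tendstoLocallyUniformlyOn_of_forall_exists_nhds fun x hx => ?_⟩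
  · obtain ⟨s, hs, hg, -⟩ := hlocal x hx
    exact (hg.differentiableAt hs).differentiableWithinAt
  · obtain ⟨s, hs, -, hlim⟩ := hlocal x hx
    exact ⟨s, mem_nhdsWithin_of_mem_nhds hs, hlim⟩

end Limits

section Differentiability

theorem exists_isOpen_eventually_add_mem {G : Type*} [AddMonoid G] [TopologicalSpace G]
    [ContinuousAdd G] {U : Set G} (hU : IsOpen U) {x : G} (hx : x ∈ U) :
    ∃ V ⊆ U, IsOpen V ∧ x ∈ V ∧ ∀ᶠ h in 𝓝 0, ∀ y ∈ V, y + h ∈ U := by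
  have hadd : Tendsto (fun q : G × G => q.2 + q.1) (𝓝 0 ×ˢ 𝓝 x) (𝓝 x) := by
    have := (tendsto_snd (f := 𝓝 (0 : G)) (g := 𝓝 x)).add tendsto_fst
    rwa [add_zero] at this
  obtain ⟨P, hP, Q, hQ, hPQ⟩ := eventually_prod_iff.1 (hadd.eventually (hU.mem_nhds hx))
  obtain ⟨V, hVsub, hV, hxV⟩ := mem_nhds_iff.1 hQ
  exact ⟨V ∩ U, inter_subset_right, hV.inter hU, ⟨hxV, hx⟩,
    hP.mono fun h hh y hy => hPQ hh (hVsub hy.1)⟩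

variable {E F : Type*} [NormedAddCommGroup E] [NormedSpace ℂ E] [FiniteDimensional ℂ E]
  [NormedAddCommGroup F] [NormedSpace ℂ F] [CompleteSpace F] {f : E → F} {U : Set E}

theorem continuousOn_fderiv (hU : IsOpen U) (hf : DifferentiableOn ℂ f U) :
    ContinuousOn (fderiv ℂ f) U := by
  -- The translates of `f` converge to `f` locally uniformly, so their derivatives converge as well.
  intro x hx
  obtain ⟨V, hVU, hV, hxV, hadd⟩ := exists_isOpen_eventually_add_mem hU hx
  have hdiff : ∀ᶠ h in 𝓝 (0 : E), DifferentiableOn ℂ (fun y => f (y + h)) V := by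
    filter_upwards [hadd] with h hh
    exact hf.comp (differentiableOn_id.add_const h) hh
  have hlim : TendstoLocallyUniformlyOn (fun h y => f (y + h)) f (𝓝 (0 : E)) V := by
    rw [hV.tendstoLocallyUniformlyOn_iff_forall_tendsto]
    intro y hy
    have hfy : Tendsto f (𝓝 y) (𝓝 (f y)) :=
      (hf.differentiableAt (hU.mem_nhds (hVU hy))).continuousAt
    have hsum : Tendsto (fun q : E × E => q.2 + q.1) (𝓝 0 ×ˢ 𝓝 y) (𝓝 y) := by
      have := (tendsto_snd (f := 𝓝 (0 : E)) (g := 𝓝 y)).add tendsto_fst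
      rwa [add_zero] at this
    exact ((hfy.comp tendsto_snd).prodMk_nhds (hfy.comp hsum)).mono_right
      (nhds_le_uniformity _)
  have htranslate : Tendsto (fun h => fderiv ℂ f (x + h)) (𝓝 0) (𝓝 (fderiv ℂ f x)) := by
    simpa only [fderiv_comp_add_right] using
      (differentiableOn_and_tendstoLocallyUniformlyOn_fderiv hV hdiff hlim).2.tendsto_at hxV
  refine ContinuousAt.continuousWithinAt ?_
  have := htranslate.comp (tendsto_sub_nhds_zero_iff.2 (tendsto_id (x := 𝓝 x)))
  simpa [ContinuousAt, Function.comp_def] using this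

theorem contDiffAt_one_of_differentiableOn (hU : IsOpen U) (hf : DifferentiableOn ℂ f U) {x : E}
    (hx : x ∈ U) : ContDiffAt ℂ 1 f x := by
  refine ContDiffOn.contDiffAt (s := U) ?_ (hU.mem_nhds hx)
  rw [← zero_add (1 : WithTop ℕ∞), contDiffOn_succ_iff_fderiv_of_isOpen hU]
  exact ⟨hf, by simp, contDiffOn_zero.2 (continuousOn_fderiv hU hf)⟩

theorem hasStrictFDerivAt_of_differentiableOn (hU : IsOpen U) (hf : DifferentiableOn ℂ f U) {x : E}
    (hx : x ∈ U) : HasStrictFDerivAt f (fderiv ℂ f x) x :=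
  (contDiffAt_one_of_differentiableOn hU hf hx).hasStrictFDerivAt one_ne_zero

theorem tendstoLocallyUniformlyOn_differenceQuotient (hU : IsOpen U)
    (hf : DifferentiableOn ℂ f U) (v : E) :
    TendstoLocallyUniformlyOn (fun (t : ℂ) x => t⁻¹ • (f (x + t • v) - f x))
      (fun x => fderiv ℂ f x v) (𝓝[≠] 0) U := by
  rw [hU.tendstoLocallyUniformlyOn_iff_forall_tendsto]
  intro x hx
  let l : Filter (ℂ × E) := 𝓝[≠] 0 ×ˢ 𝓝 x
  have ht : Tendsto (fun q : ℂ × E => q.1) l (𝓝 0) :=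
    tendsto_nhdsWithin_iff.1 tendsto_fst |>.1
  have hderiv : Tendsto (fun q : ℂ × E => fderiv ℂ f q.2 v) l (𝓝 (fderiv ℂ f x v)) :=
    (((continuousOn_fderiv hU hf).continuousAt (hU.mem_nhds hx)).clm_apply
      continuousAt_const).tendsto.comp tendsto_snd
  have hpair : Tendsto (fun q : ℂ × E => (q.2 + q.1 • v, q.2)) l (𝓝 (x, x)) := by
    refine Tendsto.prodMk_nhds ?_ tendsto_snd
    simpa using (tendsto_snd (f := 𝓝[≠] (0 : ℂ)) (g := 𝓝 x)).add (ht.smul_const v)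
  have herror : (fun q : ℂ × E => f (q.2 + q.1 • v) - f q.2 - q.1 • fderiv ℂ f x v) =o[l]
      fun q => q.1 := by
    have hstrict := (hasStrictFDerivAt_of_differentiableOn hU hf hx).isLittleO.comp_tendsto hpair
    simp only [Function.comp_def, add_sub_cancel_left, map_smul] at hstrict
    refine hstrict.trans_isBigO (.of_bound ‖v‖ (.of_forall fun q => ?_))
    rw [norm_smul, mul_comm]
  have hquotient : Tendsto (fun q : ℂ × E => q.1⁻¹ • (f (q.2 + q.1 • v) - f q.2)) l
      (𝓝 (fderiv ℂ f x v)) := by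
    have hne : ∀ᶠ q : ℂ × E in l, q.1 ≠ 0 := tendsto_fst.eventually eventually_mem_nhdsWithin
    refine tendsto_sub_nhds_zero_iff.1 (herror.tendsto_inv_smul_nhds_zero.congr' ?_)
    filter_upwards [hne] with q hq
    rw [smul_sub, inv_smul_smul₀ hq]
  exact (hderiv.prodMk_nhds hquotient).mono_right (nhds_le_uniformity _)

theorem differentiableOn_fderiv_apply (hU : IsOpen U) (hf : DifferentiableOn ℂ f U) (v : E) :
    DifferentiableOn ℂ (fun x => fderiv ℂ f x v) U := by
  intro x hx
  obtain ⟨V, hVU, hV, hxV, hadd⟩ := exists_isOpen_eventually_add_mem hU hx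
  have ht : Tendsto (fun t : ℂ => t • v) (𝓝[≠] 0) (𝓝 0) := by
    simpa using (tendsto_id.smul_const v).mono_left (nhdsWithin_le_nhds (a := (0 : ℂ)))
  have hdiff : ∀ᶠ t in 𝓝[≠] (0 : ℂ),
      DifferentiableOn ℂ (fun y => t⁻¹ • (f (y + t • v) - f y)) V := by
    filter_upwards [ht.eventually hadd] with t hVt
    exact ((hf.comp (differentiableOn_id.add_const _) hVt).sub (hf.mono hVU)).const_smul t⁻¹
  have hlim := (tendstoLocallyUniformlyOn_differenceQuotient hU hf v).mono hVU
  exact ((differentiableOn_and_tendstoLocallyUniformlyOn_fderiv hV hdiff hlim).1.differentiableAt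
    (hV.mem_nhds hxV)).differentiableWithinAt

end Differentiability

section Hurwitz

variable {ι E : Type*} [NormedAddCommGroup E] [NormedSpace ℂ E] {p : Filter ι}

theorem exists_eq_zero_of_norm_lt_of_forall_mem_frontier [Nontrivial E] {f : E → ℂ} {U : Set E}
    {c : ℝ} (hU : Bornology.IsBounded U) (hf : DiffContOnCl ℂ f U) {x : E} (hx : x ∈ U)
    (hxc : ‖f x‖ < c) (hc : ∀ y ∈ frontier U, c ≤ ‖f y‖) : ∃ y ∈ U, f y = 0 := by
  by_contra! hne
  have hc0 : 0 < c := (norm_nonneg _).trans_lt hxc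
  have hne' : ∀ y ∈ closure U, f y ≠ 0 := by
    rw [closure_eq_self_union_frontier]
    rintro y (hy | hy)
    · exact hne y hy
    · exact norm_pos_iff.1 (hc0.trans_le (hc y hy))
  have hinv : ‖(f x)⁻¹‖ ≤ c⁻¹ := by
    refine Complex.norm_le_of_forall_mem_frontier_norm_le hU (hf.inv hne') (fun y hy => ?_)
      (subset_closure hx)
    rw [Pi.inv_apply, norm_inv]
    exact inv_anti₀ hc0 (hc y hy)
  rw [norm_inv, inv_le_inv₀ (norm_pos_iff.2 (hne x hx)) hc0] at hinv
  exact hxc.not_ge hinv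

theorem eventually_exists_eq_zero {f : ι → ℂ → ℂ} {g : ℂ → ℂ} {U : Set ℂ} (hU : IsOpen U)
    (hd : ∀ᶠ i in p, DifferentiableOn ℂ (f i) U) (hlim : TendstoLocallyUniformlyOn f g p U) {a : ℂ}
    (ha : a ∈ U) (hga : g a = 0) (hg0 : ¬∀ᶠ z in 𝓝 a, g z = 0) :
    ∀ᶠ i in p, ∃ z ∈ U, f i z = 0 := by
  rcases p.eq_or_neBot with rfl | _
  · exact eventually_bot
  have hg := (differentiableOn_and_tendstoLocallyUniformlyOn_fderiv hU hd hlim).1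
  have hisolated :=
    (hg.analyticAt (hU.mem_nhds ha)).eventually_eq_zero_or_eventually_ne_zero.resolve_left hg0
  rw [eventually_nhdsWithin_iff] at hisolated
  obtain ⟨r, hr, hball⟩ := nhds_basis_closedBall.eventually_iff.1
    (hisolated.and (hU.eventually_mem ha))
  have hsub : closedBall a r ⊆ U := fun z hz => (hball hz).2
  obtain ⟨s, hs, hmin⟩ := (isCompact_sphere a r).exists_isMinOn
    (NormedSpace.sphere_nonempty.2 hr.le)
    (hg.continuousOn.mono (sphere_subset_closedBall.trans hsub)).norm
  have hgs : 0 < ‖g s‖ := norm_pos_iff.2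
    ((hball (sphere_subset_closedBall hs)).1 (ne_of_mem_sphere hs hr.ne'))
  have hunif := (tendstoLocallyUniformlyOn_iff_forall_isCompact hU).1 hlim _ hsub
    (isCompact_closedBall a r)
  filter_upwards [hd, tendstoUniformlyOn_iff.1 hunif _ (half_pos hgs)] with i hdi hi
  have hfa : ‖f i a‖ < ‖g s‖ / 2 := by
    simpa [hga] using hi a (mem_closedBall_self hr.le)
  have hsphere : ∀ z ∈ frontier (ball a r), ‖g s‖ / 2 ≤ ‖f i z‖ := by
    rw [frontier_ball a hr.ne']
    intro z hz
    have hclose := hi z (sphere_subset_closedBall hz)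
    have hmin' : ‖g s‖ ≤ ‖g z‖ := hmin hz
    rw [dist_eq_norm] at hclose
    linarith [norm_sub_norm_le (g z) (f i z)]
  obtain ⟨z, hz, hfz⟩ := exists_eq_zero_of_norm_lt_of_forall_mem_frontier isBounded_ball
    (hdi.mono (closure_ball_subset_closedBall.trans hsub)).diffContOnCl (mem_ball_self hr) hfa
    hsphere
  exact ⟨z, hsub (ball_subset_closedBall hz), hfz⟩

theorem convex_preimage_line {V : Set E} (hV : Convex ℝ V) (a v : E) :
    Convex ℝ ((fun t : ℂ => a + t • v) ⁻¹' V) :=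
  (hV.translate_preimage_right a).linear_preimage
    ((LinearMap.toSpanSingleton ℂ E v).restrictScalars ℝ)

variable [FiniteDimensional ℂ E] [p.NeBot] {f : ι → E → ℂ} {g : E → ℂ} {U : Set E}

theorem eqOn_zero_of_tendstoLocallyUniformlyOn_of_convex (hU : IsOpen U) (hUc : Convex ℝ U)
    (hd : ∀ᶠ i in p, DifferentiableOn ℂ (f i) U) (hne : ∀ᶠ i in p, ∀ x ∈ U, f i x ≠ 0)
    (hlim : TendstoLocallyUniformlyOn f g p U) {a : E} (ha : a ∈ U) (hga : g a = 0) :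
    EqOn g 0 U := by
  intro x hx
  let line : ℂ → E := fun t => a + t • (x - a)
  let D : Set ℂ := line ⁻¹' U
  have hline : Differentiable ℂ line := by fun_prop
  have hD : IsOpen D := hU.preimage hline.continuous
  have h0 : (0 : ℂ) ∈ D := by simpa [D, line] using ha
  have h1 : (1 : ℂ) ∈ D := by simpa [D, line] using hx
  have hg := (differentiableOn_and_tendstoLocallyUniformlyOn_fderiv hU hd hlim).1
  have hgline : AnalyticOnNhd ℂ (g ∘ line) D :=
    (hg.comp hline.differentiableOn (mapsTo_preimage _ _)).analyticOnNhd hD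
  have hnear : ∀ᶠ t in 𝓝 0, (g ∘ line) t = 0 := by
    by_contra hg0
    obtain ⟨i, ⟨t, ht, hft⟩, hi⟩ := ((eventually_exists_eq_zero hD
      (hd.mono fun i hi => hi.comp hline.differentiableOn (mapsTo_preimage _ _))
      (hlim.comp line (mapsTo_preimage _ _) hline.continuous.continuousOn) h0
      (by simp [line, hga]) hg0).and hne).exists
    exact hi _ ht hft
  simpa [line] using hgline.eqOn_zero_of_preconnected_of_eventuallyEq_zero
    (convex_preimage_line hUc a (x - a)).isPreconnected h0 hnear h1

theorem forall_ne_zero_of_tendstoLocallyUniformlyOn (hU : IsOpen U) (hUc : IsPreconnected U)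
    (hd : ∀ᶠ i in p, DifferentiableOn ℂ (f i) U) (hne : ∀ᶠ i in p, ∀ x ∈ U, f i x ≠ 0)
    (hlim : TendstoLocallyUniformlyOn f g p U) {a : E} (ha : a ∈ U) (hga : g a ≠ 0) :
    ∀ x ∈ U, g x ≠ 0 := by
  have hg := (differentiableOn_and_tendstoLocallyUniformlyOn_fderiv hU hd hlim).1
  have hzero : IsOpen {x ∈ U | g x = 0} := by
    refine isOpen_iff.2 fun x ⟨hx, hgx⟩ => ?_
    obtain ⟨r, hr, hrU⟩ := isOpen_iff.1 hU x hx
    have hball := eqOn_zero_of_tendstoLocallyUniformlyOn_of_convex isOpen_ball (convex_ball x r)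
      (hd.mono fun i hi => hi.mono hrU) (hne.mono fun i hi y hy => hi y (hrU hy))
      (hlim.mono hrU) (mem_ball_self hr) hgx
    exact ⟨r, hr, fun y hy => ⟨hrU hy, hball hy⟩⟩
  have hnonzero : IsOpen {x ∈ U | g x ≠ 0} :=
    hg.continuousOn.isOpen_inter_preimage hU isOpen_ne
  intro x hx hgx
  obtain ⟨y, -, hy, hy'⟩ := hUc _ _ hzero hnonzero (fun y hy => by
    by_cases h : g y = 0 <;> simp [hy, h]) ⟨x, hx, hx, hgx⟩ ⟨a, ha, ha, hga⟩
  exact hy'.2 hy.2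

theorem deriv_ne_zero_of_injOn {f : ℂ → ℂ} {U : Set ℂ} (hU : IsOpen U)
    (hf : DifferentiableOn ℂ f U) (hinj : InjOn f U) {a : ℂ} (ha : a ∈ U) : deriv f a ≠ 0 := by
  intro hda
  obtain ⟨V, hVU, hV, haV, hadd⟩ := exists_isOpen_eventually_add_mem hU ha
  have hmem : ∀ᶠ t in 𝓝[≠] (0 : ℂ), t ≠ 0 ∧ ∀ z ∈ V, z + t ∈ U :=
    eventually_mem_nhdsWithin.and (nhdsWithin_le_nhds hadd)
  -- `deriv f` is a limit of difference quotients, which have no zeros as `f` is injective: Hurwitz.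
  have hnear : ∀ᶠ z in 𝓝 a, deriv f z = 0 := by
    by_contra hderiv
    have hlim : TendstoLocallyUniformlyOn (fun t z => t⁻¹ * (f (z + t) - f z)) (deriv f)
        (𝓝[≠] 0) V := by
      simpa using (tendstoLocallyUniformlyOn_differenceQuotient hU hf 1).mono hVU
    have hd : ∀ᶠ t in 𝓝[≠] (0 : ℂ),
        DifferentiableOn ℂ (fun z => t⁻¹ * (f (z + t) - f z)) V :=
      hmem.mono fun t ht =>
        ((hf.comp (differentiableOn_id.add_const t) ht.2).sub (hf.mono hVU)).const_mul t⁻¹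
    obtain ⟨t, ⟨z, hz, hzero⟩, ht, hVt⟩ :=
      ((eventually_exists_eq_zero hV hd hlim haV hda hderiv).and hmem).exists
    have hfz : f (z + t) = f z := by simpa [ht, sub_eq_zero] using hzero
    exact ht (by simpa using hinj (hVt z hz) (hVU hz) hfz)
  obtain ⟨r, hr, hball⟩ := eventually_nhds_iff_ball.1 (hnear.and (hU.eventually_mem ha))
  have hconst : ∀ z ∈ ball a r, f z = f a := fun z hz =>
    isOpen_ball.is_const_of_deriv_eq_zero (convex_ball a r).isPreconnected
      (hf.mono fun y hy => (hball y hy).2) (fun y hy => (hball y hy).1) hz (mem_ball_self hr)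
  have hsub : ∀ᶠ z in 𝓝[≠] a, z ≠ a ∧ z ∈ ball a r :=
    eventually_mem_nhdsWithin.and (nhdsWithin_le_nhds (ball_mem_nhds a hr))
  obtain ⟨z, hza, hz⟩ := hsub.exists
  exact hza (hinj (hball z hz).2 ha (hconst z hz))

end Hurwitz

section LocalInverse

variable {E F : Type*} [NormedAddCommGroup E] [NormedSpace ℂ E] [FiniteDimensional ℂ E]
  [NormedAddCommGroup F] [NormedSpace ℂ F] {U : Set E}

theorem exists_rightInvOn_ball_of_hasFDerivAt_equiv [CompleteSpace F] {f : E → F} (hU : IsOpen U)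
    (hf : DifferentiableOn ℂ f U) {a : E} (ha : a ∈ U) {e : E ≃L[ℂ] F}
    (he : HasFDerivAt f (e : E →L[ℂ] F) a) :
    ∃ ψ : F → E, ∃ r > 0, DifferentiableOn ℂ ψ (ball (f a) r) ∧ MapsTo ψ (ball (f a) r) U ∧
      RightInvOn ψ f (ball (f a) r) ∧ ψ (f a) = a ∧
      HasFDerivAt ψ (e.symm : F →L[ℂ] E) (f a) := by
  have : CompleteSpace E := FiniteDimensional.complete ℂ E
  have hfc := contDiffAt_one_of_differentiableOn hU hf ha
  have hstrict := hfc.hasStrictFDerivAt' he one_ne_zero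
  have hψa : hstrict.localInverse f e a (f a) = a := hstrict.localInverse_apply_image
  have hψ : ContDiffAt ℂ 1 (hstrict.localInverse f e a) (f a) :=
    hfc.to_localInverse he one_ne_zero
  have hdiff := (hψ.eventually (by simp)).mono fun y hy => hy.differentiableAt one_ne_zero
  have hmem := hψ.continuousAt.eventually_mem (hψa.symm ▸ hU.mem_nhds ha)
  obtain ⟨r, hr, hball⟩ := eventually_nhds_iff_ball.1
    (hdiff.and (hmem.and hstrict.eventually_right_inverse))
  exact ⟨_, r, hr, fun y hy => (hball y hy).1.differentiableWithinAt,
    fun y hy => (hball y hy).2.1, fun y hy => (hball y hy).2.2, hψa,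
    hstrict.to_localInverse.hasFDerivAt⟩

theorem exists_straightening {φ : E → ℂ} (hU : IsOpen U) (hφ : DifferentiableOn ℂ φ U) {a v : E}
    (ha : a ∈ U) (hv : fderiv ℂ φ a v = 1) :
    ∃ ψ : E → E, ∃ r > 0, DifferentiableOn ℂ ψ (ball a r) ∧ MapsTo ψ (ball a r) U ∧
      InjOn ψ (ball a r) ∧ ψ a = a ∧ HasFDerivAt ψ (ContinuousLinearMap.id ℂ E) a ∧
      ∀ y ∈ ball a r, φ (ψ y) = φ a + fderiv ℂ φ a (y - a) := by
  have : CompleteSpace E := FiniteDimensional.complete ℂ E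
  set A := fderiv ℂ φ a
  let χ : E → E := fun x => x + (φ x - φ a - A (x - a)) • v
  have hχ : DifferentiableOn ℂ χ U := by fun_prop
  have hχa : χ a = a := by simp [χ]
  have hχ' : HasFDerivAt χ (ContinuousLinearEquiv.refl ℂ E : E →L[ℂ] E) a := by
    have hremainder : HasFDerivAt (fun x => φ x - φ a - A (x - a)) (A - A) a :=
      ((hφ.hasFDerivAt (hU.mem_nhds ha)).sub_const _).sub
        (A.hasFDerivAt.comp a ((hasFDerivAt_id a).sub_const a))
    exact ((hasFDerivAt_id a).add (hremainder.smul_const v)).congr_fderiv (by ext; simp)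
  obtain ⟨ψ, r, hr, hψ, hψU, hinv, hψa, hψ'⟩ :=
    exists_rightInvOn_ball_of_hasFDerivAt_equiv hU hχ ha hχ'
  rw [hχa] at hψ hψU hinv hψa hψ'
  refine ⟨ψ, r, hr, hψ, hψU, hinv.injOn, hψa, hψ', fun y hy => ?_⟩
  have hAχ : ∀ x, A (χ x - a) = φ x - φ a := fun x => by
    simp only [χ, map_sub, map_add, map_smul, hv, smul_eq_mul]
    ring
  rw [← sub_eq_iff_eq_add', ← hAχ, hinv hy]

end LocalInverse

section ZeroSets

theorem eqOn_zero_of_forall_iteratedDeriv_eq_zero {F : Type*} [NormedAddCommGroup F]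
    [NormedSpace ℂ F] [CompleteSpace F] {f : ℂ → F} {D : Set ℂ} (hD : IsPreconnected D)
    (hf : AnalyticOnNhd ℂ f D) {c : ℂ} (hc : c ∈ D) (h : ∀ k, iteratedDeriv k f c = 0) :
    EqOn f 0 D := by
  refine hf.eqOn_zero_of_preconnected_of_eventuallyEq_zero hD hc (analyticOrderAt_eq_top.1 ?_)
  exact ENat.eq_top_iff_forall_ge.2 fun k =>
    (natCast_le_analyticOrderAt_iff_iteratedDeriv_eq_zero (hf c hc)).2 fun i _ => h i

variable {E : Type*} [NormedAddCommGroup E] [NormedSpace ℂ E] {h φ : E → ℂ} {V : Set E}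

theorem eventually_exists_line_eq_zero (hV : IsOpen V) (hh : DifferentiableOn ℂ h V) {b v : E}
    (hb : b ∈ V) (hhb : h b = 0) (hne : ¬∀ᶠ t in 𝓝 (0 : ℂ), h (b + t • v) = 0) :
    ∀ᶠ y in 𝓝 b, ∃ t : ℂ, y + t • v ∈ V ∧ h (y + t • v) = 0 := by
  have hadd : Continuous fun q : E × ℂ => q.1 + q.2 • v := by fun_prop
  have hmem : ∀ᶠ q : E × ℂ in 𝓝 b ×ˢ 𝓝 0, q.1 + q.2 • v ∈ V := by
    rw [← nhds_prod_eq]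
    exact hadd.continuousAt.eventually_mem (by simpa using hV.mem_nhds hb)
  obtain ⟨P, hP, Q, hQ, hPQ⟩ := eventually_prod_iff.1 hmem
  obtain ⟨D, hDQ, hD, h0⟩ := _root_.mem_nhds_iff.1 hQ
  have hd : ∀ᶠ y in 𝓝 b, DifferentiableOn ℂ (fun t : ℂ => h (y + t • v)) D :=
    hP.mono fun y hy => hh.comp (f := fun t : ℂ => y + t • v) (by fun_prop)
      fun t ht => hPQ hy (hDQ ht)
  have hlim : TendstoLocallyUniformlyOn (fun y (t : ℂ) => h (y + t • v)) (fun t => h (b + t • v))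
      (𝓝 b) D := by
    rw [hD.tendstoLocallyUniformlyOn_iff_forall_tendsto]
    intro t ht
    have hcont : Tendsto h (𝓝 (b + t • v)) (𝓝 (h (b + t • v))) :=
      (hh.differentiableAt (hV.mem_nhds (hPQ hP.self_of_nhds (hDQ ht)))).continuousAt
    have hvary : Tendsto (fun q : E × ℂ => q.1 + q.2 • v) (𝓝 b ×ˢ 𝓝 t) (𝓝 (b + t • v)) := by
      rw [← nhds_prod_eq]
      exact hadd.tendsto (b, t)
    have hfixed : Tendsto (fun q : E × ℂ => b + q.2 • v) (𝓝 b ×ˢ 𝓝 t) (𝓝 (b + t • v)) :=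
      ((Continuous.tendsto (by fun_prop) t).comp tendsto_snd : Tendsto
        ((fun s : ℂ => b + s • v) ∘ Prod.snd) _ _)
    exact ((hcont.comp hfixed).prodMk_nhds (hcont.comp hvary)).mono_right (nhds_le_uniformity _)
  filter_upwards [hP, eventually_exists_eq_zero hD hd hlim h0 (by simpa using hhb) hne]
    with y hy ⟨t, ht, hzero⟩
  exact ⟨t, hPQ hy (hDQ ht), hzero⟩

variable [FiniteDimensional ℂ E]

theorem iteratedDeriv_line_eq_zero (hV : IsOpen V)
    (hzero : ∀ φ : E → ℂ, DifferentiableOn ℂ φ V → (∀ x ∈ V, h x = 0 → φ x = 0) →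
      ∀ x ∈ V, h x = 0 → fderiv ℂ φ x = 0)
    {a : E} (ha : a ∈ V) (hha : h a = 0) (v : E) (k : ℕ) (hφ : DifferentiableOn ℂ φ V)
    (hφ0 : ∀ x ∈ V, h x = 0 → φ x = 0) :
    iteratedDeriv k (fun t : ℂ => φ (a + t • v)) 0 = 0 := by
  induction k generalizing φ with
  | zero => simpa using hφ0 a ha hha
  | succ k ih =>
    have hline : ∀ᶠ t in 𝓝 (0 : ℂ), a + t • v ∈ V :=
      (Continuous.continuousAt (by fun_prop)).eventually_mem (by simpa using hV.mem_nhds ha)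
    have hderiv : deriv (fun t : ℂ => φ (a + t • v)) =ᶠ[𝓝 0]
        fun t => fderiv ℂ φ (a + t • v) v := by
      filter_upwards [hline] with t ht
      have hlin : HasDerivAt (fun t : ℂ => a + t • v) v t := by
        simpa using ((hasDerivAt_id t).smul_const v).const_add a
      exact ((hφ.hasFDerivAt (hV.mem_nhds ht)).comp_hasDerivAt t hlin).deriv
    rw [iteratedDeriv_succ', hderiv.iteratedDeriv_eq]
    exact ih (differentiableOn_fderiv_apply hV hφ v) fun x hx hhx => by
      rw [hzero φ hφ hφ0 x hx hhx, zero_apply]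

theorem exists_fderiv_ne_zero_of_zeros_subset (hV : IsOpen V) (hVc : Convex ℝ V)
    (hh : DifferentiableOn ℂ h V) {a : E} (ha : a ∈ V) (hha : h a = 0) (hne : ¬EqOn h 0 V) :
    ∃ φ : E → ℂ, DifferentiableOn ℂ φ V ∧ (∀ x ∈ V, h x = 0 → φ x = 0) ∧
      ∃ b ∈ V, h b = 0 ∧ fderiv ℂ φ b ≠ 0 := by
  -- Otherwise all iterated directional derivatives of `h` vanish on the zeros of `h`.
  by_contra! hzero
  refine hne fun x hx => ?_
  let line : ℂ → E := fun t => a + t • (x - a)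
  have hline : Differentiable ℂ line := by fun_prop
  have h0 : (0 : ℂ) ∈ line ⁻¹' V := by simpa [line] using ha
  have h1 : (1 : ℂ) ∈ line ⁻¹' V := by simpa [line] using hx
  have hanalytic : AnalyticOnNhd ℂ (h ∘ line) (line ⁻¹' V) :=
    (hh.comp hline.differentiableOn (mapsTo_preimage _ _)).analyticOnNhd
      (hV.preimage hline.continuous)
  simpa [line] using eqOn_zero_of_forall_iteratedDeriv_eq_zero
    (convex_preimage_line hVc a (x - a)).isPreconnected hanalytic h0
    (fun k => iteratedDeriv_line_eq_zero hV hzero ha hha (x - a) k hh fun _ _ => id) h1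

end ZeroSets

section Discs

variable {E : Type*} [NormedAddCommGroup E] [NormedSpace ℂ E] {h φ : E → ℂ} {U V : Set E}

theorem exists_ball_add_smul_mem (hV : IsOpen V) {a : E} (ha : a ∈ V) (k : E) :
    ∃ r > 0, ∀ t ∈ ball (0 : ℂ) r, a + t • k ∈ V :=
  isOpen_iff.1 (hV.preimage (f := fun t : ℂ => a + t • k) (by fun_prop)) 0 (by simpa using ha)

variable [FiniteDimensional ℂ E]

theorem exists_chart_hyperplane_subset_zeros (hV : IsOpen V) (hh : DifferentiableOn ℂ h V)
    (hφ : DifferentiableOn ℂ φ V) (hzero : ∀ x ∈ V, h x = 0 → φ x = 0) {b : E} (hb : b ∈ V)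
    (hhb : h b = 0) (hφb : fderiv ℂ φ b ≠ 0) :
    ∃ ψ : E → E, ∃ r > 0, DifferentiableOn ℂ ψ (ball b r) ∧ MapsTo ψ (ball b r) V ∧
      InjOn ψ (ball b r) ∧ ∀ y ∈ ball b r, fderiv ℂ φ b (y - b) = 0 → h (ψ y) = 0 := by
  obtain ⟨v, hv⟩ : ∃ v, fderiv ℂ φ b v = 1 := by
    obtain ⟨w, hw⟩ := DFunLike.ne_iff.1 hφb
    exact ⟨(fderiv ℂ φ b w)⁻¹ • w, by simpa using inv_mul_cancel₀ hw⟩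
  obtain ⟨ψ, ρ, hρ, hψ, hψV, hψinj, hψb, -, hψφ⟩ := exists_straightening hV hφ hb hv
  have hhyper : ∀ y, fderiv ℂ φ b (y - b) = 0 → ∀ t : ℂ, y + t • v ∈ ball b ρ →
      h (ψ (y + t • v)) = 0 → t = 0 := by
    intro y hy t ht hht
    have hlevel := hψφ _ ht
    rw [hzero _ (hψV ht) hht, hzero b hb hhb, add_sub_right_comm, map_add, map_smul, hy,
      hv] at hlevel
    simpa using hlevel.symm
  have hne : ¬∀ᶠ t in 𝓝 (0 : ℂ), h (ψ (b + t • v)) = 0 := by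
    intro hall
    have hball : ∀ᶠ t in 𝓝 (0 : ℂ), b + t • v ∈ ball b ρ :=
      (Continuous.continuousAt (by fun_prop)).eventually_mem (by simpa using ball_mem_nhds b hρ)
    have hnear : ∀ᶠ t in 𝓝[≠] (0 : ℂ), t = 0 :=
      nhdsWithin_le_nhds ((hball.and hall).mono fun t ht => hhyper b (by simp) t ht.1 ht.2)
    obtain ⟨t, ht, ht0⟩ := (hnear.and eventually_mem_nhdsWithin).exists
    exact ht0 ht
  -- The zero on the line through `y` persists; for `y` on the hyperplane it can only be `y` itself.
  have hvanish : ∀ᶠ y in 𝓝 b, fderiv ℂ φ b (y - b) = 0 → h (ψ y) = 0 := by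
    filter_upwards [eventually_exists_line_eq_zero isOpen_ball (hh.comp hψ hψV) (mem_ball_self hρ)
      (by simpa [hψb] using hhb) hne] with y ⟨t, ht, hht⟩ hy
    simpa [hhyper y hy t ht hht] using hht
  obtain ⟨r, hr, hball⟩ := eventually_nhds_iff_ball.1 (hvanish.and (ball_mem_nhds b hρ))
  have hsub : ball b r ⊆ ball b ρ := fun y hy => (hball y hy).2
  exact ⟨ψ, r, hr, hψ.mono hsub, hψV.mono_left hsub, hψinj.mono hsub, fun y hy => (hball y hy).1⟩

theorem exists_injective_disc_zeros (hE : 2 ≤ Module.finrank ℂ E) (hU : IsOpen U)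
    (hh : DifferentiableOn ℂ h U) {a : E} (ha : a ∈ U) (hha : h a = 0) :
    ∃ γ : ℂ → E, ∃ r > 0, DifferentiableOn ℂ γ (ball 0 r) ∧ InjOn γ (ball 0 r) ∧
      ∀ t ∈ ball 0 r, γ t ∈ U ∧ h (γ t) = 0 := by
  obtain ⟨ρ, hρ, hρU⟩ := isOpen_iff.1 hU a ha
  by_cases hall : EqOn h 0 (ball a ρ)
  · have : Nontrivial E := Module.nontrivial_of_finrank_pos (R := ℂ) (by lia)
    obtain ⟨k, hk⟩ := exists_ne (0 : E)
    obtain ⟨r, hr, hline⟩ := exists_ball_add_smul_mem isOpen_ball (mem_ball_self hρ) k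
    exact ⟨fun t => a + t • k, r, hr, by fun_prop,
      ((add_right_injective a).comp (smul_left_injective ℂ hk)).injOn,
      fun t ht => ⟨hρU (hline t ht), hall (hline t ht)⟩⟩
  · obtain ⟨φ, hφ, hzero, b, hb, hhb, hφb⟩ := exists_fderiv_ne_zero_of_zeros_subset isOpen_ball
      (convex_ball a ρ) (hh.mono hρU) (mem_ball_self hρ) hha hall
    obtain ⟨ψ, ε, hε, hψ, hψV, hψinj, hψh⟩ :=
      exists_chart_hyperplane_subset_zeros isOpen_ball (hh.mono hρU) hφ hzero hb hhb hφb
    obtain ⟨k, hk, hk0⟩ : ∃ k, fderiv ℂ φ b k = 0 ∧ k ≠ 0 :=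
      Submodule.exists_mem_ne_zero_of_ne_bot (p := (fderiv ℂ φ b).ker)
        (LinearMap.ker_ne_bot_of_finrank_lt (by rw [Module.finrank_self]; lia))
    obtain ⟨r, hr, hline⟩ := exists_ball_add_smul_mem isOpen_ball (mem_ball_self hε) k
    have hlineinj : InjOn (fun t : ℂ => b + t • k) (ball 0 r) :=
      ((add_right_injective b).comp (smul_left_injective ℂ hk0)).injOn
    exact ⟨fun t => ψ (b + t • k), r, hr, hψ.comp (by fun_prop) hline,
      hψinj.comp hlineinj hline,
      fun t ht => ⟨hρU (hψV (hline t ht)), hψh _ (hline t ht) (by simp [hk])⟩⟩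

end Discs

section Determinant

theorem differentiableOn_det {D E : Type*} [NormedAddCommGroup D] [NormedSpace ℂ D]
    [NormedAddCommGroup E] [NormedSpace ℂ E] [FiniteDimensional ℂ E] {A : D → E →L[ℂ] E}
    {U : Set D} (hA : ∀ v, DifferentiableOn ℂ (fun x => A x v) U) :
    DifferentiableOn ℂ (fun x => (A x).det) U := by
  let b := Module.finBasis ℂ E
  have hentry : ∀ i j, DifferentiableOn ℂ
      (fun x => LinearMap.toMatrix b b (A x : E →ₗ[ℂ] E) i j) U := fun i j => by
    simp only [LinearMap.toMatrix_apply]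
    exact (b.coord i).toContinuousLinearMap.differentiable.comp_differentiableOn (hA (b j))
  have hdet : ∀ x, (A x).det = (LinearMap.toMatrix b b (A x : E →ₗ[ℂ] E)).det := fun x =>
    (LinearMap.det_toMatrix b _).symm
  simp only [hdet, Matrix.det_apply]
  refine .fun_sum fun σ _ => .const_smul (fun x hx => ?_) _
  exact (HasFDerivWithinAt.finsetProd fun i _ =>
    (hentry (σ i) i x hx).hasFDerivWithinAt).differentiableWithinAt

theorem det_ne_zero_iff_injective {K V : Type*} [Field K] [AddCommGroup V] [Module K V]
    [FiniteDimensional K V] (A : V →ₗ[K] V) :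
    A.det ≠ 0 ↔ Function.Injective A := by
  rw [← LinearMap.ker_eq_bot, ← LinearMap.isUnit_iff_ker_eq_bot, LinearMap.isUnit_iff_isUnit_det,
    isUnit_iff_ne_zero]

end Determinant

section Osgood

universe u v

variable {E : Type u} {F : Type v} [NormedAddCommGroup E] [NormedSpace ℂ E]
  [NormedAddCommGroup F] [NormedSpace ℂ F] {U : Set E} {f : E → F}

theorem exists_fderiv_ne_zero_of_injective_disc (hU : IsOpen U) (hf : DifferentiableOn ℂ f U)
    (hinj : InjOn f U) {γ : ℂ → E} {r : ℝ} (hr : 0 < r) (hγ : DifferentiableOn ℂ γ (ball 0 r))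
    (hγinj : InjOn γ (ball 0 r)) (hγU : MapsTo γ (ball 0 r) U) :
    ∃ t ∈ ball 0 r, fderiv ℂ f (γ t) ≠ 0 := by
  by_contra! hzero
  have hderiv : EqOn (deriv (f ∘ γ)) 0 (ball 0 r) := fun t ht => by
    have hcomp := (hf.hasFDerivAt (hU.mem_nhds (hγU ht))).comp_hasDerivAt t
      (hγ.hasDerivAt (isOpen_ball.mem_nhds ht))
    simpa [hzero t ht] using hcomp.deriv
  have h0 : (0 : ℂ) ∈ ball 0 r := mem_ball_self hr
  have hmem : ∀ᶠ t in 𝓝[≠] (0 : ℂ), t ≠ 0 ∧ t ∈ ball 0 r :=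
    eventually_mem_nhdsWithin.and (nhdsWithin_le_nhds (isOpen_ball.mem_nhds h0))
  obtain ⟨t, ht0, ht⟩ := hmem.exists
  have hconst := isOpen_ball.is_const_of_deriv_eq_zero (convex_ball 0 r).isPreconnected
    (hf.comp hγ hγU) hderiv ht h0
  exact ht0 (hγinj ht h0 (hinj (hγU ht) (hγU h0) hconst))

variable [FiniteDimensional ℂ E]

theorem exists_parametrization_levelSet {φ : E → ℂ} (hU : IsOpen U) (hφ : DifferentiableOn ℂ φ U)
    {A : E →L[ℂ] ℂ} {a v : E} (ha : a ∈ U) (hA : HasFDerivAt φ A a) (hv : A v = 1) :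
    ∃ θ : A.ker → E, ∃ r > 0, DifferentiableOn ℂ θ (ball 0 r) ∧ MapsTo θ (ball 0 r) U ∧
      InjOn θ (ball 0 r) ∧ θ 0 = a ∧ HasFDerivAt θ A.ker.subtypeL 0 ∧
      ∀ k ∈ ball 0 r, φ (θ k) = φ a := by
  obtain rfl := hA.fderiv
  obtain ⟨ψ, r, hr, hψ, hψU, hψinj, hψa, hψ', hψφ⟩ := exists_straightening hU hφ ha hv
  let ι : (fderiv ℂ φ a).ker → E := fun k => a + k
  have hι : ∀ k, HasFDerivAt ι (fderiv ℂ φ a).ker.subtypeL k := fun k =>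
    (fderiv ℂ φ a).ker.subtypeL.hasFDerivAt.const_add a
  have hι0 : ι 0 = a := by simp [ι]
  have hιball : MapsTo ι (ball 0 r) (ball a r) := fun k hk => by simpa [ι] using hk
  have hιinj : Function.Injective ι := (add_right_injective a).comp Subtype.val_injective
  refine ⟨ψ ∘ ι, r, hr, hψ.comp (fun k _ => (hι k).differentiableAt.differentiableWithinAt) hιball,
    hψU.comp hιball, hψinj.comp hιinj.injOn hιball, by rw [Function.comp_apply, hι0, hψa],
    HasFDerivAt.comp 0 (hι0.symm ▸ hψ') (hι 0), fun k hk => ?_⟩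
  have hk0 : fderiv ℂ φ a k = 0 := k.2
  rw [Function.comp_apply, hψφ _ (hιball hk), add_sub_cancel_left, hk0, add_zero]

theorem exists_injective_slice [CompleteSpace F] (hU : IsOpen U) (hf : DifferentiableOn ℂ f U)
    (hinj : InjOn f U) {a v : E} (ha : a ∈ U) {ℓ : F →L[ℂ] ℂ} (hv : ℓ (fderiv ℂ f a v) = 1) :
    ∃ G : (ℓ.comp (fderiv ℂ f a)).ker → ℓ.ker, ∃ r > 0, DifferentiableOn ℂ G (ball 0 r) ∧
      InjOn G (ball 0 r) ∧ ∀ k, (fderiv ℂ G 0 k : F) = fderiv ℂ f a k := by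
  have hfa : HasFDerivAt f (fderiv ℂ f a) a := hf.hasFDerivAt (hU.mem_nhds ha)
  obtain ⟨θ, r, hr, hθ, hθU, hθinj, hθ0, hθ', hθℓ⟩ := exists_parametrization_levelSet hU
    (ℓ.differentiable.comp_differentiableOn hf) ha (ℓ.hasFDerivAt.comp a hfa) hv
  obtain ⟨P, hP⟩ : ℓ.ker.ClosedComplemented :=
    ℓ.closedComplemented_ker_of_rightInverse (.toSpanSingleton ℂ (fderiv ℂ f a v)) fun t => by
      simp [hv]
  let G : (ℓ.comp (fderiv ℂ f a)).ker → ℓ.ker := fun k => P (f (θ k) - f a)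
  have hG : ∀ k ∈ ball 0 r, (G k : F) = f (θ k) - f a := fun k hk =>
    congrArg Subtype.val (hP ⟨f (θ k) - f a, by
      rw [LinearMap.mem_ker, ContinuousLinearMap.coe_coe, map_sub, sub_eq_zero]
      exact hθℓ k hk⟩)
  refine ⟨G, r, hr, P.differentiable.comp_differentiableOn ((hf.comp hθ hθU).sub_const _),
    fun k hk k' hk' hkk => ?_, fun k => ?_⟩
  · refine hθinj hk hk' (hinj (hθU hk) (hθU hk') (sub_left_injective (b := f a) ?_))
    exact (hG k hk).symm.trans ((congrArg Subtype.val hkk).trans (hG k' hk'))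
  · have hderiv : HasFDerivAt G
        (P.comp ((fderiv ℂ f a).comp (ℓ.comp (fderiv ℂ f a)).ker.subtypeL)) 0 :=
      P.hasFDerivAt.comp 0 ((HasFDerivAt.comp 0 (hθ0.symm ▸ hfa) hθ').sub_const _)
    rw [hderiv.fderiv]
    exact congrArg Subtype.val (hP ⟨fderiv ℂ f a k, k.2⟩)

theorem fderiv_ne_zero_of_injOn_of_finrank_eq_one [FiniteDimensional ℂ F]
    (hE : Module.finrank ℂ E = 1) (hF : Module.finrank ℂ F = 1) (hU : IsOpen U)
    (hf : DifferentiableOn ℂ f U) (hinj : InjOn f U) {a : E} (ha : a ∈ U) :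
    fderiv ℂ f a ≠ 0 := by
  let e : ℂ ≃L[ℂ] E := .ofFinrankEq (by rw [hE, Module.finrank_self])
  let L : F ≃L[ℂ] ℂ := .ofFinrankEq (by rw [hF, Module.finrank_self])
  have ha' : e (e.symm a) ∈ U := by rwa [e.apply_symm_apply]
  have hmodel : deriv (L ∘ f ∘ e) (e.symm a) ≠ 0 :=
    deriv_ne_zero_of_injOn (hU.preimage e.continuous)
      (L.differentiable.comp_differentiableOn
        (hf.comp e.differentiable.differentiableOn (mapsTo_preimage _ _)))
      (L.injective.comp_injOn (hinj.comp e.injective.injOn (mapsTo_preimage _ _))) ha'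
  intro hzero
  have hchain := L.hasFDerivAt.comp_hasDerivAt _
    ((hf.hasFDerivAt (hU.mem_nhds ha')).comp_hasDerivAt _ e.hasDerivAt)
  exact hmodel (by simpa [hzero] using hchain.deriv)

theorem fderiv_ne_zero_of_injOn_of_injective_or_eq_zero [FiniteDimensional ℂ F] [Nontrivial E]
    (hEF : Module.finrank ℂ E = Module.finrank ℂ F) (hU : IsOpen U)
    (hf : DifferentiableOn ℂ f U) (hinj : InjOn f U)
    (halt : ∀ x ∈ U, fderiv ℂ f x ≠ 0 → Function.Injective (fderiv ℂ f x)) {a : E} (ha : a ∈ U) :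
    fderiv ℂ f a ≠ 0 := by
  have : CompleteSpace F := FiniteDimensional.complete ℂ F
  have hpos : 0 < Module.finrank ℂ E := Module.finrank_pos
  rcases Nat.lt_or_ge (Module.finrank ℂ E) 2 with hE | hE
  · exact fderiv_ne_zero_of_injOn_of_finrank_eq_one (by lia) (by lia) hU hf hinj ha
  intro hzero
  -- The derivative vanishes wherever `det` does, so `f` is constant on a disc of zeros of `det`.
  let L : F ≃L[ℂ] E := .ofFinrankEq hEF.symm
  let A : E → E →L[ℂ] E := fun x => (L : F →L[ℂ] E).comp (fderiv ℂ f x)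
  have hdet : DifferentiableOn ℂ (fun x => (A x).det) U := differentiableOn_det fun v =>
    (L : F →L[ℂ] E).differentiable.comp_differentiableOn (differentiableOn_fderiv_apply hU hf v)
  have hdeta : (A a).det = 0 := by
    simp [A, hzero, ContinuousLinearMap.det]
  obtain ⟨γ, r, hr, hγ, hγinj, hγdet⟩ := exists_injective_disc_zeros hE hU hdet ha hdeta
  obtain ⟨t, ht, hne⟩ := exists_fderiv_ne_zero_of_injective_disc hU hf hinj hr hγ hγinj
    fun t ht => (hγdet t ht).1
  exact (det_ne_zero_iff_injective (A (γ t) : E →ₗ[ℂ] E)).2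
    (L.injective.comp (halt _ (hγdet t ht).1 hne)) (hγdet t ht).2

theorem injective_fderiv_of_injOn [FiniteDimensional ℂ F]
    (hEF : Module.finrank ℂ E = Module.finrank ℂ F) (hU : IsOpen U)
    (hf : DifferentiableOn ℂ f U) (hinj : InjOn f U) {a : E} (ha : a ∈ U) :
    Function.Injective (fderiv ℂ f a) := by
  have : CompleteSpace F := FiniteDimensional.complete ℂ F
  induction hn : Module.finrank ℂ E generalizing E F with
  | zero =>
    have : Subsingleton E := Module.finrank_zero_iff.1 hn
    exact Function.injective_of_subsingleton _
  | succ n ih =>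
    have : Nontrivial E := Module.nontrivial_of_finrank_pos (R := ℂ) (by lia)
    suffices halt : ∀ x ∈ U, fderiv ℂ f x ≠ 0 → Function.Injective (fderiv ℂ f x) from
      halt a ha (fderiv_ne_zero_of_injOn_of_injective_or_eq_zero hEF hU hf hinj halt ha)
    -- Where the derivative is nonzero, restrict `f` to a level set of one of its components.
    intro x hx hne
    obtain ⟨v, hv⟩ := DFunLike.ne_iff.1 hne
    obtain ⟨ℓ, hℓ⟩ := SeparatingDual.exists_eq_one (R := ℂ) hv
    obtain ⟨G, r, hr, hG, hGinj, hG'⟩ := exists_injective_slice hU hf hinj hx hℓ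
    have hdomain : Module.finrank ℂ (ℓ.comp (fderiv ℂ f x)).ker + 1 = Module.finrank ℂ E :=
      Module.Dual.finrank_ker_add_one_of_ne_zero fun h => by
        simpa [h] using hℓ.symm.trans (LinearMap.congr_fun h v)
    have hcodomain : Module.finrank ℂ ℓ.ker + 1 = Module.finrank ℂ F :=
      Module.Dual.finrank_ker_add_one_of_ne_zero fun h => by
        simpa using hℓ.symm.trans (LinearMap.congr_fun h (fderiv ℂ f x v))
    have hslice := ih (by lia) isOpen_ball hG hGinj (mem_ball_self hr) inferInstance (by lia)
    refine (injective_iff_map_eq_zero _).2 fun y hy => ?_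
    have hyker : y ∈ (ℓ.comp (fderiv ℂ f x)).ker := by simp [hy]
    have hGy : fderiv ℂ G 0 ⟨y, hyker⟩ = fderiv ℂ G 0 0 :=
      Subtype.ext (by rw [hG', hG']; simpa using hy)
    exact congrArg Subtype.val (hslice hGy)

theorem det_fderiv_ne_zero_of_injOn {f : E → E} (hU : IsOpen U) (hf : DifferentiableOn ℂ f U)
    (hinj : InjOn f U) {a : E} (ha : a ∈ U) : (fderiv ℂ f a).det ≠ 0 :=
  (det_ne_zero_iff_injective _).2 (injective_fderiv_of_injOn rfl hU hf hinj ha)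

end Osgood

section Openness

variable {ι E F : Type*} [NormedAddCommGroup E] [NormedSpace ℂ E] [FiniteDimensional ℂ E]
  [NormedAddCommGroup F] [NormedSpace ℂ F] [CompleteSpace F] {p : Filter ι} [p.NeBot]
  {f : ι → E → F} {g : E → F} {U : Set E}

theorem eventually_approximatesLinearOn_closedBall (hU : IsOpen U)
    (hd : ∀ᶠ i in p, DifferentiableOn ℂ (f i) U) (hlim : TendstoLocallyUniformlyOn f g p U)
    {x : E} (hx : x ∈ U) {c : NNReal} (hc : 0 < c) :
    ∃ r > 0, closedBall x r ⊆ U ∧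
      ∀ᶠ i in p, ApproximatesLinearOn (f i) (fderiv ℂ g x) (closedBall x r) c := by
  obtain ⟨hg, hlim'⟩ := differentiableOn_and_tendstoLocallyUniformlyOn_fderiv hU hd hlim
  have hc2 : (0 : ℝ) < c / 2 := by positivity
  have hcont : ∀ᶠ y in 𝓝 x, dist (fderiv ℂ g y) (fderiv ℂ g x) < c / 2 :=
    ((continuousOn_fderiv hU hg).continuousAt (hU.mem_nhds hx)).eventually (ball_mem_nhds _ hc2)
  obtain ⟨s, hs, hunif⟩ := tendstoLocallyUniformlyOn_iff.1 hlim' (c / 2) hc2 x hx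
  rw [hU.nhdsWithin_eq hx] at hs
  obtain ⟨r, hr, hball⟩ := nhds_basis_closedBall.eventually_iff.1
    ((hU.eventually_mem hx).and (hcont.and hs))
  refine ⟨r, hr, fun y hy => (hball hy).1, ?_⟩
  filter_upwards [hd, hunif] with i hdi hi y hy z hz
  refine (convex_closedBall x r).norm_image_sub_le_of_norm_fderiv_le' (𝕜 := ℂ)
    (fun u hu => hdi.differentiableAt (hU.mem_nhds (hball hu).1)) (fun u hu => ?_) hz hy
  rw [← dist_eq_norm]
  linarith [dist_triangle_left (fderiv ℂ (f i) u) (fderiv ℂ g x) (fderiv ℂ g u),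
    hi u (hball hu).2.2, (hball hu).2.1]

theorem eventually_mem_image_of_range_fderiv_eq_top (hU : IsOpen U)
    (hd : ∀ᶠ i in p, DifferentiableOn ℂ (f i) U) (hlim : TendstoLocallyUniformlyOn f g p U)
    {x : E} (hx : x ∈ U) (hsurj : (fderiv ℂ g x).range = ⊤) : ∀ᶠ i in p, g x ∈ f i '' U := by
  have : CompleteSpace E := FiniteDimensional.complete ℂ E
  let R := (fderiv ℂ g x).nonlinearRightInverseOfSurjective hsurj
  have hR : 0 < R.nnnorm := (fderiv ℂ g x).nonlinearRightInverseOfSurjective_nnnorm_pos hsurj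
  have hR' : (0 : ℝ) < (R.nnnorm : ℝ)⁻¹ / 2 := by positivity
  obtain ⟨r, hr, hrU, happrox⟩ :=
    eventually_approximatesLinearOn_closedBall hU hd hlim hx (c := R.nnnorm⁻¹ / 2) (by positivity)
  have hclose := (hlim.tendsto_at hx).eventually (ball_mem_nhds _ (mul_pos hR' hr))
  filter_upwards [happrox, hclose] with i hi hgx
  have hmem : g x ∈ closedBall (f i x) (((R.nnnorm : ℝ)⁻¹ - ↑(R.nnnorm⁻¹ / 2)) * r) := by
    rw [mem_closedBall, dist_comm, NNReal.coe_div, NNReal.coe_inv, NNReal.coe_ofNat, sub_half]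
    exact hgx.le
  exact image_mono hrU (hi.surjOn_closedBall_of_nonlinearRightInverse R hr.le subset_rfl hmem)

end Openness

section InverseLimit

theorem tendstoLocallyUniformlyOn_continuous_comp {ι α β γ : Type*} [TopologicalSpace α]
    [UniformSpace β] [UniformSpace γ] {p : Filter ι} {F : ι → α → β} {f : α → β} {φ : β → γ}
    {s : Set α} (hφ : Continuous φ) (hF : TendstoLocallyUniformlyOn F f p s)
    (hf : ContinuousOn f s) :
    TendstoLocallyUniformlyOn (fun i x => φ (F i x)) (fun x => φ (f x)) p s := by
  rw [tendstoLocallyUniformlyOn_iff_forall_tendsto] at hF ⊢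
  intro x hx
  have hfixed : Tendsto (fun q : ι × α => f q.2) (p ×ˢ 𝓝[s] x) (𝓝 (f x)) :=
    (hf x hx).tendsto.comp tendsto_snd
  have hvary : Tendsto (fun q : ι × α => F q.1 q.2) (p ×ˢ 𝓝[s] x) (𝓝 (f x)) :=
    (Uniform.tendsto_congr (hF x hx)).1 hfixed
  exact (((hφ.tendsto _).comp hfixed).prodMk_nhds ((hφ.tendsto _).comp hvary)).mono_right
    (nhds_le_uniformity _)

theorem eq_of_tendstoLocallyUniformlyOn_of_eventually_apply_eq {ι α β : Type*}
    [TopologicalSpace α] [UniformSpace β] [T2Space β] {p : Filter ι} [p.NeBot] {F : ι → α → β}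
    {f : α → β} {s : Set α} {u : ι → α} {x : α} {y : β} (hF : TendstoLocallyUniformlyOn F f p s)
    (hf : ContinuousOn f s) (hx : x ∈ s) (hu : Tendsto u p (𝓝 x)) (hus : ∀ᶠ i in p, u i ∈ s)
    (hFu : ∀ᶠ i in p, F i (u i) = y) : f x = y :=
  tendsto_nhds_unique_of_eventuallyEq
    (hF.tendsto_comp (hf x hx) hx (tendsto_nhdsWithin_iff.2 ⟨hu, hus⟩)) tendsto_const_nhds hFu

variable {ι E : Type*} [NormedAddCommGroup E] [NormedSpace ℂ E] [FiniteDimensional ℂ E]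
  {p : Filter ι} {U V : Set E} {f g : E → E}

theorem det_fderiv_ne_zero_of_eventually_apply_eq {w : E} (hf : DifferentiableAt ℂ f (g w))
    (hg : DifferentiableAt ℂ g w) (hfg : ∀ᶠ y in 𝓝 w, f (g y) = y) : (fderiv ℂ g w).det ≠ 0 := by
  have hcomp : (fderiv ℂ f (g w)).comp (fderiv ℂ g w) = ContinuousLinearMap.id ℂ E :=
    (hf.hasFDerivAt.comp w hg.hasFDerivAt).unique ((hasFDerivAt_id w).congr_of_eventuallyEq hfg)
  have hleft : Function.LeftInverse (fderiv ℂ f (g w)) (fderiv ℂ g w) := fun y =>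
    congrArg (fun A : E →L[ℂ] E => A y) hcomp
  exact (det_ne_zero_iff_injective _).2 hleft.injective

theorem differentiableOn_of_rightInvOn (hU : IsOpen U) (hV : IsOpen V)
    (hf : DifferentiableOn ℂ f U) (hinj : InjOn f U) (hg : MapsTo g V U) (hfg : RightInvOn g f V) :
    DifferentiableOn ℂ g V := fun w hw => by
  have : CompleteSpace E := FiniteDimensional.complete ℂ E
  let e := (fderiv ℂ f (g w)).toContinuousLinearEquivOfDetNeZero
    (det_fderiv_ne_zero_of_injOn hU hf hinj (hg hw))
  have he : HasFDerivAt f (e : E →L[ℂ] E) (g w) := hf.hasFDerivAt (hU.mem_nhds (hg hw))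
  obtain ⟨ψ, r, hr, hψ, hψU, hfψ, -⟩ := exists_rightInvOn_ball_of_hasFDerivAt_equiv hU hf (hg hw) he
  rw [hfg hw] at hψ hψU hfψ
  have hball : ball w r ∈ 𝓝 w := ball_mem_nhds w hr
  have hgψ : g =ᶠ[𝓝 w] ψ := by
    filter_upwards [hV.mem_nhds hw, hball] with y hyV hyball
    exact hinj (hg hyV) (hψU hyball) ((hfg hyV).trans (hfψ hyball).symm)
  exact ((hψ.differentiableAt hball).congr_of_eventuallyEq hgψ).differentiableWithinAt

theorem forall_det_fderiv_ne_zero_of_tendstoLocallyUniformlyOn [p.NeBot] {G : ι → E → E}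
    (hV : IsOpen V) (hVc : IsPreconnected V) (hG : ∀ᶠ i in p, DifferentiableOn ℂ (G i) V)
    (hG' : ∀ᶠ i in p, ∀ w ∈ V, (fderiv ℂ (G i) w).det ≠ 0)
    (hlim : TendstoLocallyUniformlyOn G g p V) {a : E} (ha : a ∈ V)
    (hga : (fderiv ℂ g a).det ≠ 0) : ∀ w ∈ V, (fderiv ℂ g w).det ≠ 0 := by
  have : CompleteSpace E := FiniteDimensional.complete ℂ E
  obtain ⟨hg, hlim'⟩ := differentiableOn_and_tendstoLocallyUniformlyOn_fderiv hV hG hlim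
  exact forall_ne_zero_of_tendstoLocallyUniformlyOn hV hVc
    (hG.mono fun i hi => differentiableOn_det (differentiableOn_fderiv_apply hV hi)) hG'
    (tendstoLocallyUniformlyOn_continuous_comp ContinuousLinearMap.continuous_det hlim'
      (continuousOn_fderiv hV hg)) ha hga

theorem mapsTo_of_tendstoLocallyUniformlyOn_of_det_fderiv_ne_zero [p.NeBot] {G : ι → E → E}
    (hV : IsOpen V) (hG : ∀ᶠ i in p, DifferentiableOn ℂ (G i) V)
    (hGU : ∀ᶠ i in p, MapsTo (G i) V U) (hlim : TendstoLocallyUniformlyOn G g p V)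
    (hg' : ∀ w ∈ V, (fderiv ℂ g w).det ≠ 0) : MapsTo g V U := fun w hw => by
  have : CompleteSpace E := FiniteDimensional.complete ℂ E
  have hrange : (fderiv ℂ g w).range = ⊤ :=
    LinearMap.range_eq_top.2 (LinearMap.equivOfDetNeZero _ (hg' w hw)).surjective
  obtain ⟨i, himage, hGi⟩ :=
    ((eventually_mem_image_of_range_fderiv_eq_top hV hG hlim hw hrange).and hGU).exists
  exact hGi.image_subset himage

theorem limit_embedding_contains_ball_general [p.NeBot] (hU : IsOpen U) (hV : IsOpen V)
    (hVc : IsPreconnected V) {F G : ι → E → E} (hF : ∀ᶠ i in p, DifferentiableOn ℂ (F i) U)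
    (hinj : ∀ᶠ i in p, InjOn (F i) U) (hFlim : TendstoLocallyUniformlyOn F f p U)
    (hGU : ∀ᶠ i in p, MapsTo (G i) V U) (hFG : ∀ᶠ i in p, RightInvOn (G i) (F i) V)
    (hGlim : TendstoLocallyUniformlyOn G g p V) {z : E} (hz : z ∈ U) (hfz : f z ∈ V) :
    MapsTo g V U ∧ RightInvOn g f V := by
  have : CompleteSpace E := FiniteDimensional.complete ℂ E
  have hG : ∀ᶠ i in p, DifferentiableOn ℂ (G i) V := by
    filter_upwards [hF, hinj, hGU, hFG] with i hFi hinji hGUi hFGi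
    exact differentiableOn_of_rightInvOn hU hV hFi hinji hGUi hFGi
  have hf : DifferentiableOn ℂ f U :=
    (differentiableOn_and_tendstoLocallyUniformlyOn_fderiv hU hF hFlim).1
  have hg : DifferentiableOn ℂ g V :=
    (differentiableOn_and_tendstoLocallyUniformlyOn_fderiv hV hG hGlim).1
  have hfg : ∀ w ∈ V, g w ∈ U → f (g w) = w := fun w hw hgw =>
    eq_of_tendstoLocallyUniformlyOn_of_eventually_apply_eq hFlim hf.continuousOn hgw
      (hGlim.tendsto_at hw) (hGU.mono fun i hi => hi hw) (hFG.mono fun i hi => hi hw)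
  have hFz : ∀ᶠ i in p, F i z ∈ V := (hFlim.tendsto_at hz).eventually_mem (hV.mem_nhds hfz)
  have hgfz : g (f z) = z := by
    refine eq_of_tendstoLocallyUniformlyOn_of_eventually_apply_eq hGlim hg.continuousOn hfz
      (hFlim.tendsto_at hz) hFz ?_
    filter_upwards [hinj, hGU, hFG, hFz] with i hinji hGUi hFGi hFzi
    exact hinji (hGUi hFzi) hz (hFGi hFzi)
  have hdet : (fderiv ℂ g (f z)).det ≠ 0 := by
    have hzU : U ∈ 𝓝 (g (f z)) := hU.mem_nhds (hgfz.symm ▸ hz)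
    have hgz : DifferentiableAt ℂ g (f z) := hg.differentiableAt (hV.mem_nhds hfz)
    refine det_fderiv_ne_zero_of_eventually_apply_eq (hf.differentiableAt hzU) hgz ?_
    filter_upwards [hV.mem_nhds hfz, hgz.continuousAt hzU] with w hw hgw using hfg w hw hgw
  have hdet_seq : ∀ᶠ i in p, ∀ w ∈ V, (fderiv ℂ (G i) w).det ≠ 0 := by
    filter_upwards [hG, hFG] with i hGi hFGi w hw
    exact det_fderiv_ne_zero_of_injOn hV hGi hFGi.injOn hw
  have hgU : MapsTo g V U := mapsTo_of_tendstoLocallyUniformlyOn_of_det_fderiv_ne_zero hV hG hGU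
    hGlim (forall_det_fderiv_ne_zero_of_tendstoLocallyUniformlyOn hV hVc hG hdet_seq hGlim hfz hdet)
  exact ⟨hgU, fun w hw => hfg w hw (hgU hw)⟩

end InverseLimit

/-- Let f_j : Ω → 𝔹ⁿ be injective holomorphic maps on a domain Ω
with f_j(z₀) = 0, converging u.o.c. to f.  Suppose B_{1-δ}(0) ⊆ f_j(Ω), let
g_j : B_{1-δ}(0) → Ω be the inverses of f_j, and suppose g_j → g u.o.c. with g
nonconstant.  Then f ∘ g = id on B_{1-δ}(0) with g mapping into Ω (so f
restricted to g(B_{1-δ}(0)) is the inverse of g), and B_{1-δ}(0) ⊆ f(Ω). -/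
theorem limit_embedding_contains_ball {n : ℕ}
    (Ω : Set (EuclideanSpace ℂ (Fin n))) (hΩopen : IsOpen Ω) (hΩconn : IsConnected Ω)
    (z₀ : EuclideanSpace ℂ (Fin n)) (hz₀ : z₀ ∈ Ω)
    (δ : ℝ) (hδ0 : 0 < δ) (hδ1 : δ < 1)
    (fseq : ℕ → EuclideanSpace ℂ (Fin n) → EuclideanSpace ℂ (Fin n))
    (hf_holo : ∀ j, DifferentiableOn ℂ (fseq j) Ω)
    (hf_inj : ∀ j, Set.InjOn (fseq j) Ω)
    (hf_ball : ∀ j, fseq j '' Ω ⊆ ball 0 1)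
    (hf_z₀ : ∀ j, fseq j z₀ = 0)
    (f : EuclideanSpace ℂ (Fin n) → EuclideanSpace ℂ (Fin n))
    (hf_lim : TendstoLocallyUniformlyOn (fun j => fseq j) f atTop Ω)
    (gseq : ℕ → EuclideanSpace ℂ (Fin n) → EuclideanSpace ℂ (Fin n))
    (hg_inv : ∀ j, ∀ w ∈ ball (0 : EuclideanSpace ℂ (Fin n)) (1 - δ),
      gseq j w ∈ Ω ∧ fseq j (gseq j w) = w)
    (g : EuclideanSpace ℂ (Fin n) → EuclideanSpace ℂ (Fin n))
    (hg_lim : TendstoLocallyUniformlyOn (fun j => gseq j) g atTop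
      (ball (0 : EuclideanSpace ℂ (Fin n)) (1 - δ)))
    (hg_nonconst : ¬ ∃ c, Set.EqOn g (fun _ => c)
      (ball (0 : EuclideanSpace ℂ (Fin n)) (1 - δ))) :
    (∀ w ∈ ball (0 : EuclideanSpace ℂ (Fin n)) (1 - δ), g w ∈ Ω ∧ f (g w) = w) ∧
      ball (0 : EuclideanSpace ℂ (Fin n)) (1 - δ) ⊆ f '' Ω := by
  have hf_zero : f z₀ = 0 :=
    tendsto_nhds_unique (hf_lim.tendsto_at hz₀) (by simpa only [hf_z₀] using tendsto_const_nhds)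
  obtain ⟨hgΩ, hfg⟩ := limit_embedding_contains_ball_general hΩopen isOpen_ball
    (convex_ball 0 (1 - δ)).isPreconnected (.of_forall hf_holo) (.of_forall hf_inj) hf_lim
    (.of_forall fun j w hw => (hg_inv j w hw).1) (.of_forall fun j w hw => (hg_inv j w hw).2)
    hg_lim hz₀ (hf_zero ▸ mem_ball_self (sub_pos.2 hδ1))
  exact ⟨fun w hw => ⟨hgΩ hw, hfg hw⟩, fun w hw => ⟨g w, hgΩ hw, hfg hw⟩⟩
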